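/- For every k ≥ 1: every M_k-good graph has at least k²/4 edges, and there exists a bipartite M_k-good graph with at most k²/4 + k edges, where M_k denotes the matching with k edges. -/

import Mathlib

open SimpleGraph

/-- A proper edge coloring of `G`: adjacent (distinct, vertex-sharing) edges get
different colors. -/
def IsProperEdgeColoring {V : Type*} (G : SimpleGraph V) (c : Sym2 V → ℕ) : Prop :=
  ∀ e₁ ∈ G.edgeSet, ∀ e₂ ∈ G.edgeSet, e₁ ≠ e₂ → (∃ v, v ∈ e₁ ∧ v ∈ e₂) → c e₁ ≠ c e₂

/-- `G` contains a rainbow copy of `H` with respect to the edge coloring `c`: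
there is an injective graph homomorphism `H → G` whose image edges receive
pairwise distinct colors. -/
def HasRainbowCopy {V W : Type*} (G : SimpleGraph V) (H : SimpleGraph W) (c : Sym2 V → ℕ) : Prop :=
  ∃ f : H →g G, Function.Injective f ∧
    ∀ e₁ ∈ H.edgeSet, ∀ e₂ ∈ H.edgeSet, c (Sym2.map f e₁) = c (Sym2.map f e₂) → e₁ = e₂

/-- `G → H`: every proper edge coloring of `G` contains a rainbow copy of `H`. -/
def ArrowsTo {V W : Type*} (G : SimpleGraph V) (H : SimpleGraph W) : Prop :=
  ∀ c : Sym2 V → ℕ, IsProperEdgeColoring G c → HasRainbowCopy G H c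

/-- The size anti-Ramsey number: the minimum number of edges of a (finite) graph
`G` with `G → H`. -/
noncomputable def ARs {W : Type*} (H : SimpleGraph W) : ℕ :=
  sInf {m | ∃ (n : ℕ) (G : SimpleGraph (Fin n)), ArrowsTo G H ∧ G.edgeSet.ncard = m}

/-- The local anti-Ramsey number: the minimum `n` such that `K_n → H`. -/
noncomputable def ARloc {W : Type*} (H : SimpleGraph W) : ℕ :=
  sInf {n | ArrowsTo (⊤ : SimpleGraph (Fin n)) H}

/-- The matching `M_k` with `k` pairwise disjoint edges, on vertex set `Fin (2k)`:
vertices `2i` and `2i+1` are matched. -/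
def matchingGraph (k : ℕ) : SimpleGraph (Fin (2 * k)) :=
  SimpleGraph.fromRel (fun v w => v.val / 2 = w.val / 2)

/-- An `H`-good coloring of `G`: a proper edge coloring with colors in the
positive integers that contains a rainbow copy of `H`, and such that every edge
of color `i` has, for each `1 ≤ j < i`, an adjacent edge of color `j`. -/
def IsHGoodColoring {V W : Type*} (H : SimpleGraph W) (G : SimpleGraph V)
    (c : Sym2 V → ℕ) : Prop :=
  IsProperEdgeColoring G c ∧
  (∀ e ∈ G.edgeSet, 1 ≤ c e) ∧
  HasRainbowCopy G H c ∧
  ∀ e ∈ G.edgeSet, ∀ j : ℕ, 1 ≤ j → j < c e →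
    ∃ e' ∈ G.edgeSet, c e' = j ∧ ∃ v, v ∈ e ∧ v ∈ e'

/-- A graph `G` is `H`-good if it admits an `H`-good coloring. -/
def HGood {V W : Type*} (H : SimpleGraph W) (G : SimpleGraph V) : Prop :=
  ∃ c : Sym2 V → ℕ, IsHGoodColoring H G c


lemma mg_edge {k : ℕ} (i : Fin k) :
    s((⟨2 * i.1, by omega⟩ : Fin (2 * k)), (⟨2 * i.1 + 1, by omega⟩ : Fin (2 * k)))
      ∈ (matchingGraph k).edgeSet := by
  rw [SimpleGraph.mem_edgeSet, matchingGraph, SimpleGraph.fromRel_adj]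
  refine ⟨by simp [Fin.ext_iff], Or.inl ?_⟩
  simp only
  omega

lemma mg_edge_exists {k : ℕ} (e : Sym2 (Fin (2 * k))) (he : e ∈ (matchingGraph k).edgeSet) :
    ∃ i : Fin k, e = s((⟨2 * i.1, by omega⟩ : Fin (2 * k)),
      (⟨2 * i.1 + 1, by omega⟩ : Fin (2 * k))) := by
  induction e with
  | _ x y =>
    rw [SimpleGraph.mem_edgeSet, matchingGraph, SimpleGraph.fromRel_adj] at he
    obtain ⟨hne, h⟩ := he
    have hne' : x.1 ≠ y.1 := fun h => hne (Fin.ext h)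
    refine ⟨⟨x.1 / 2, by omega⟩, ?_⟩
    simp only [Sym2.eq_iff, Fin.ext_iff]
    omega

/-- A set of `n` positive integers has sum at least `n (n + 1) / 2`. -/
lemma sum_pos_finset (S : Finset ℕ) (h : ∀ x ∈ S, 1 ≤ x) :
    S.card * (S.card + 1) ≤ 2 * ∑ x ∈ S, x := by
  induction S using Finset.induction_on_max with
  | empty => simp
  | insert a s ha ih =>
    have hna : a ∉ s := fun hh => lt_irrefl _ (ha a hh)
    rw [Finset.card_insert_of_notMem hna, Finset.sum_insert hna]
    have ih' := ih (fun x hx => h x (Finset.mem_insert_of_mem hx))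
    have hsub : s ⊆ Finset.Ico 1 a := fun x hx =>
      Finset.mem_Ico.2 ⟨h x (Finset.mem_insert_of_mem hx), ha x hx⟩
    have hc := Finset.card_le_card hsub
    rw [Nat.card_Ico] at hc
    have h1 := h a (Finset.mem_insert_self _ _)
    have : s.card + 1 ≤ a := by omega
    nlinarith

lemma lower_bound {k : ℕ} {V : Type} [Fintype V] (G : SimpleGraph V)
    (hG : HGood (matchingGraph k) G) : k * (k + 1) ≤ 4 * G.edgeSet.ncard := by
  classical
  obtain ⟨c, -, hpos, ⟨f, hf, hrain⟩, hgood⟩ := hG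
  let H : Fin k → Sym2 (Fin (2 * k)) := fun i =>
    s((⟨2 * i.1, by omega⟩ : Fin (2 * k)), (⟨2 * i.1 + 1, by omega⟩ : Fin (2 * k)))
  have hH : ∀ i, H i ∈ (matchingGraph k).edgeSet := fun i => mg_edge i
  have Hdisj : ∀ i j v, v ∈ H i → v ∈ H j → i = j := by
    intro i j v hi hj
    simp only [H, Sym2.mem_iff, Fin.ext_iff] at hi hj
    apply Fin.ext
    omega
  let M : Fin k → Sym2 V := fun i => Sym2.map f (H i)
  have hM : ∀ i, M i ∈ G.edgeSet := fun i => f.map_mem_edgeSet (hH i)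
  have Mdisj : ∀ i j v, v ∈ M i → v ∈ M j → i = j := by
    intro i j v hi hj
    obtain ⟨a, ha, rfl⟩ := Sym2.mem_map.1 hi
    obtain ⟨b, hb, hab⟩ := Sym2.mem_map.1 hj
    have := hf hab
    subst this
    exact Hdisj i j _ ha hb
  have hcinj : Function.Injective (fun i => c (M i)) := by
    intro i j hij
    have := hrain _ (hH i) _ (hH j) hij
    obtain ⟨v, hv⟩ : ∃ v, v ∈ H i := ⟨_, Sym2.mem_mk_left _ _⟩
    exact Hdisj i j v hv (this ▸ hv)
  have hsum : k * (k + 1) ≤ 2 * ∑ i, c (M i) := by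
    have := sum_pos_finset (Finset.univ.image (fun i => c (M i))) (by
      intro x hx
      obtain ⟨i, -, rfl⟩ := Finset.mem_image.1 hx
      exact hpos _ (hM i))
    rw [Finset.card_image_of_injective _ hcinj, Finset.sum_image (fun i _ j _ h => hcinj h)] at this
    simpa using this
  let E : Finset (Sym2 V) := G.edgeSet.toFinite.toFinset
  have hE : ∀ e, e ∈ E ↔ e ∈ G.edgeSet := fun e => by simp [E]
  let r : Fin k → Sym2 V → Prop := fun i e => ∃ v, v ∈ M i ∧ v ∈ e
  have h1 : ∀ i, c (M i) ≤ (E.bipartiteAbove r i).card := by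
    intro i
    have hsub : Finset.Icc 1 (c (M i)) ⊆ (E.bipartiteAbove r i).image c := by
      intro j hj
      rw [Finset.mem_Icc] at hj
      rw [Finset.mem_image]
      rcases hj.2.eq_or_lt with h | h
      · exact ⟨M i, (Finset.mem_bipartiteAbove r).2 ⟨(hE _).2 (hM i),
          ⟨f ⟨2 * i.1, by omega⟩, Sym2.mem_map.2 ⟨_, Sym2.mem_mk_left _ _, rfl⟩,
            Sym2.mem_map.2 ⟨_, Sym2.mem_mk_left _ _, rfl⟩⟩⟩, h.symm⟩
      · obtain ⟨e', he', hc, hv⟩ := hgood _ (hM i) j hj.1 h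
        exact ⟨e', (Finset.mem_bipartiteAbove r).2 ⟨(hE _).2 he', hv⟩, hc⟩
    have := (Finset.card_le_card hsub).trans Finset.card_image_le
    simpa using this
  have h2 : ∀ e ∈ E, ((Finset.univ : Finset (Fin k)).bipartiteBelow r e).card ≤ 2 := by
    intro e _
    induction e with
    | _ x y =>
      have hsub : (Finset.univ : Finset (Fin k)).bipartiteBelow r s(x, y) ⊆
          (Finset.univ.filter (fun i => x ∈ M i)) ∪ (Finset.univ.filter (fun i => y ∈ M i)) := by
        intro i hi
        obtain ⟨-, v, hv, hv'⟩ := (Finset.mem_bipartiteBelow r).1 hi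
        rcases Sym2.mem_iff.1 hv' with rfl | rfl <;> simp [hv]
      have one : ∀ x, (Finset.univ.filter (fun i => x ∈ M i)).card ≤ 1 := by
        intro x
        rw [Finset.card_le_one]
        intro a ha b hb
        exact Mdisj a b x (by simpa using ha) (by simpa using hb)
      have := (Finset.card_le_card hsub).trans (Finset.card_union_le _ _)
      have := one x
      have := one y
      omega
  have h3 : ∑ i, c (M i) ≤ E.card * 2 := by
    calc ∑ i, c (M i) ≤ ∑ i, (E.bipartiteAbove r i).card := Finset.sum_le_sum fun i _ => h1 i
      _ = ∑ e ∈ E, ((Finset.univ : Finset (Fin k)).bipartiteBelow r e).card :=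
        Finset.sum_card_bipartiteAbove_eq_sum_card_bipartiteBelow r
      _ ≤ E.card * 2 := by simpa using Finset.sum_le_card_nsmul E _ 2 h2
  have h4 : G.edgeSet.ncard = E.card := Set.ncard_eq_toFinset_card _ _
  omega

lemma comap_mem {V W : Type} (G : SimpleGraph V) (e : W ≃ V) (s : Sym2 W) :
    s ∈ (G.comap e).edgeSet ↔ Sym2.map e s ∈ G.edgeSet := by
  induction s with
  | _ x y => simp

lemma transport {V W U : Type} (H : SimpleGraph U) (G : SimpleGraph V) (e : W ≃ V)
    (hG : HGood H G) : HGood H (G.comap e) := by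
  obtain ⟨c, hprop, hpos, ⟨f, hf, hrain⟩, hgood⟩ := hG
  refine ⟨fun s => c (Sym2.map e s), ?_, ?_, ?_, ?_⟩
  · rintro e₁ h₁ e₂ h₂ hne ⟨v, hv₁, hv₂⟩
    exact hprop _ ((comap_mem G e _).1 h₁) _ ((comap_mem G e _).1 h₂)
      (fun h => hne (Sym2.map.injective e.injective h))
      ⟨e v, Sym2.mem_map.2 ⟨v, hv₁, rfl⟩, Sym2.mem_map.2 ⟨v, hv₂, rfl⟩⟩
  · intro s hs
    exact hpos _ ((comap_mem G e _).1 hs)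
  · refine ⟨(SimpleGraph.Iso.comap e G).symm.toHom.comp f, ?_, ?_⟩
    · intro a b hab
      exact hf (e.symm.injective hab)
    · have key : ∀ s : Sym2 U, Sym2.map e
          (Sym2.map ((SimpleGraph.Iso.comap e G).symm.toHom.comp f) s) = Sym2.map f s := by
        intro s
        induction s with
        | _ x y => simp
      intro e₁ h₁ e₂ h₂ h
      simp only [key] at h
      exact hrain e₁ h₁ e₂ h₂ h
  · intro s hs j hj hlt
    obtain ⟨e', he', hc, v, hv, hv'⟩ := hgood _ ((comap_mem G e _).1 hs) j hj hlt
    have hback : Sym2.map e (Sym2.map e.symm e') = e' := by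
      induction e' with
      | _ x y => simp
    obtain ⟨w, hw, rfl⟩ := Sym2.mem_map.1 hv
    refine ⟨Sym2.map e.symm e', (comap_mem G e _).2 (by rwa [hback]), ?_, w, hw, ?_⟩
    · simp only [hback, hc]
    · exact Sym2.mem_map.2 ⟨_, hv', by simp⟩

/-- The bipartite graph of a relation. -/
def bipGraph {α β : Type} (R : α → β → Prop) : SimpleGraph (α ⊕ β) where
  Adj x y := (∃ a b, R a b ∧ x = Sum.inl a ∧ y = Sum.inr b) ∨
    (∃ a b, R a b ∧ y = Sum.inl a ∧ x = Sum.inr b)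
  symm := ⟨fun _ _ h => h.symm⟩
  loopless := ⟨by
    rintro x (⟨a, b, -, h, h'⟩ | ⟨a, b, -, h, h'⟩) <;> simp [h] at h'⟩

lemma bip_mem {α β : Type} (R : α → β → Prop) (e : Sym2 (α ⊕ β)) :
    e ∈ (bipGraph R).edgeSet ↔ ∃ a b, R a b ∧ e = s(Sum.inl a, Sum.inr b) := by
  induction e with
  | _ x y =>
    simp only [SimpleGraph.mem_edgeSet, bipGraph, Sym2.eq_iff]
    grind

/-- The edge coloring of the bipartite graph given by a matrix of colors. -/
def bipCol {α β : Type} (g : α → β → ℕ) : Sym2 (α ⊕ β) → ℕ :=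
  Sym2.lift ⟨fun x y => match x, y with
    | Sum.inl a, Sum.inr b => g a b
    | Sum.inr b, Sum.inl a => g a b
    | _, _ => 0, by
      rintro (x | x) (y | y) <;> rfl⟩

lemma bipCol_mk {α β : Type} (g : α → β → ℕ) (a : α) (b : β) :
    bipCol g s(Sum.inl a, Sum.inr b) = g a b := rfl

lemma bip_good {α β : Type} {k : ℕ} (R : α → β → Prop) (g : α → β → ℕ)
    (p : Fin k → α) (q : Fin k → β) (hp : Function.Injective p) (hq : Function.Injective q)
    (hR : ∀ i, R (p i) (q i)) (hg : ∀ i j, g (p i) (q i) = g (p j) (q j) → i = j)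
    (hpos : ∀ a b, R a b → 1 ≤ g a b)
    (hrow : ∀ a b b', R a b → R a b' → g a b = g a b' → b = b')
    (hcol : ∀ a a' b, R a b → R a' b → g a b = g a' b → a = a')
    (hgood : ∀ a b, R a b → ∀ j, 1 ≤ j → j < g a b →
      (∃ b', R a b' ∧ g a b' = j) ∨ (∃ a', R a' b ∧ g a' b = j)) :
    HGood (matchingGraph k) (bipGraph R) := by
  refine ⟨bipCol g, ?_, ?_, ?_, ?_⟩
  · rintro e₁ h₁ e₂ h₂ hne ⟨v, hv₁, hv₂⟩ hc
    obtain ⟨a, b, hab, rfl⟩ := (bip_mem R _).1 h₁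
    obtain ⟨a', b', hab', rfl⟩ := (bip_mem R _).1 h₂
    rw [bipCol_mk, bipCol_mk] at hc
    apply hne
    rcases Sym2.mem_iff.1 hv₁ with rfl | rfl
    · rcases Sym2.mem_iff.1 hv₂ with h | h
      · cases h
        rw [hrow _ _ _ hab hab' hc]
      · cases h
    · rcases Sym2.mem_iff.1 hv₂ with h | h
      · cases h
      · cases h
        rw [hcol _ _ _ hab hab' hc]
  · intro e he
    obtain ⟨a, b, hab, rfl⟩ := (bip_mem R _).1 he
    exact hpos a b hab
  · let F : Fin (2 * k) → α ⊕ β := fun x =>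
      if x.1 % 2 = 0 then Sum.inl (p ⟨x.1 / 2, by omega⟩) else Sum.inr (q ⟨x.1 / 2, by omega⟩)
    have hF : ∀ i : Fin k, Sym2.map F s((⟨2 * i.1, by omega⟩ : Fin (2 * k)),
        (⟨2 * i.1 + 1, by omega⟩ : Fin (2 * k))) = s(Sum.inl (p i), Sum.inr (q i)) := by
      intro i
      have h1 : (2 * i.1 + 1) / 2 = i.1 := by omega
      have h2 : (2 * i.1 + 1) % 2 = 1 := by omega
      have h3 : (2 * i.1) / 2 = i.1 := by omega
      have h4 : (2 * i.1) % 2 = 0 := by omega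
      simp only [F, Sym2.map_mk, h1, h2, h3, h4]
      simp
    refine ⟨⟨F, ?_⟩, ?_, ?_⟩
    · intro x y hxy
      obtain ⟨i, hi⟩ := mg_edge_exists s(x, y) hxy
      have h : Sym2.map F s(x, y) ∈ (bipGraph R).edgeSet := by
        rw [hi, hF]
        exact (bip_mem R _).2 ⟨_, _, hR i, rfl⟩
      exact h
    · intro x y hxy
      change F x = F y at hxy
      simp only [F] at hxy
      split_ifs at hxy with h1 h2 h2
      · have := hp (Sum.inl_injective hxy)
        simp only [Fin.mk.injEq] at this
        apply Fin.ext
        omega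
      · have := hq (Sum.inr_injective hxy)
        simp only [Fin.mk.injEq] at this
        apply Fin.ext
        omega
    · intro e₁ h₁ e₂ h₂ h
      obtain ⟨i, rfl⟩ := mg_edge_exists _ h₁
      obtain ⟨j, rfl⟩ := mg_edge_exists _ h₂
      change bipCol g (Sym2.map F _) = bipCol g (Sym2.map F _) at h
      rw [hF, hF, bipCol_mk, bipCol_mk] at h
      rw [hg i j h]
  · intro e he j hj hlt
    obtain ⟨a, b, hab, rfl⟩ := (bip_mem R _).1 he
    rw [bipCol_mk] at hlt
    rcases hgood a b hab j hj hlt with ⟨b', h, hc⟩ | ⟨a', h, hc⟩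
    · exact ⟨s(Sum.inl a, Sum.inr b'), (bip_mem R _).2 ⟨_, _, h, rfl⟩, hc, Sum.inl a,
        Sym2.mem_mk_left _ _, Sym2.mem_mk_left _ _⟩
    · exact ⟨s(Sum.inl a', Sum.inr b), (bip_mem R _).2 ⟨_, _, h, rfl⟩, hc, Sum.inr b,
        Sym2.mem_mk_right _ _, Sym2.mem_mk_right _ _⟩

lemma bip_colorable {α β : Type} (R : α → β → Prop) : (bipGraph R).Colorable 2 := by
  refine ⟨SimpleGraph.Coloring.mk (fun x => if x.isLeft then 0 else 1) ?_⟩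
  rintro x y (⟨a, b, -, rfl, rfl⟩ | ⟨a, b, -, rfl, rfl⟩) <;> simp

/-- The relation of the extremal example: `(false, i)` are the row vertices, `(true, i)` the
extra leaves. -/
def exR (k : ℕ) (a : Bool × Fin k) (j : Fin k) : Prop :=
  if a.1 then a.2 = j ∧ k ≤ 2 * j.1 else a.2 = j ∨ (a.2 < j ∧ k ≤ a.2.1 + j.1)

/-- The colors of the extremal example. -/
def exG (k : ℕ) (a : Bool × Fin k) (j : Fin k) : ℕ :=
  if a.1 then 2 * j.1 + 1 - k else if a.2 = j then j.1 + 1 else a.2.1 + j.1 + 1 - k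

lemma ex_good (k : ℕ) : HGood (matchingGraph k) (bipGraph (exR k)) := by
  refine bip_good (exR k) (exG k) (fun i => (false, i)) (fun i => i) ?_ (fun _ _ h => h) ?_ ?_ ?_
    ?_ ?_ ?_
  · intro i j h
    simpa using h
  · intro i
    simp [exR]
  · intro i j h
    simp [exG] at h
    exact Fin.ext h
  · rintro ⟨t, i⟩ j h
    cases t <;> simp [exR, exG] at * <;> grind
  · rintro ⟨t, i⟩ j j' h h' hc
    cases t <;> simp [exR, exG] at * <;> grind
  · rintro ⟨t, i⟩ ⟨t', i'⟩ j h h' hc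
    cases t <;> cases t' <;> simp [exR, exG] at * <;> grind
  · -- colors below `2 j + 2 - k` occur at the column vertex `j`
    have col : ∀ (j : Fin k) (c : ℕ), 1 ≤ c → c ≤ 2 * j.1 + 1 - k →
        ∃ a', exR k a' j ∧ exG k a' j = c := by
      intro j c hc hcj
      rcases hcj.eq_or_lt with h | h
      · refine ⟨(true, j), ?_, ?_⟩ <;> simp [exR, exG] <;> omega
      · refine ⟨(false, ⟨c + k - 1 - j.1, by omega⟩), ?_, ?_⟩
        · simp only [exR, Fin.ext_iff, Fin.lt_def]
          right
          omega
        · simp only [exG, Fin.ext_iff]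
          rw [if_neg (by simp), if_neg (by omega)]
          omega
    rintro ⟨t, i⟩ j h c hc hlt
    cases t
    · by_cases hij : i = j
      · subst hij
        simp [exG] at hlt
        by_cases hc2 : c ≤ 2 * i.1 + 1 - k
        · exact Or.inr (col _ _ hc hc2)
        · left
          refine ⟨⟨c + k - 1 - i.1, by omega⟩, ?_, ?_⟩
          · simp only [exR, Fin.ext_iff, Fin.lt_def]
            right
            omega
          · simp only [exG, Fin.ext_iff]
            rw [if_neg (by simp), if_neg (by omega)]
            omega
      · right
        apply col _ _ hc
        simp [exR, exG, hij] at h hlt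
        have := h.1
        rw [Fin.lt_def] at this
        omega
    · right
      apply col _ _ hc
      simp [exG] at hlt
      omega

lemma sum_bound (k n : ℕ) : 4 * ∑ j ∈ Finset.range n, (2 * j + 1 - k) ≤ (2 * n - k) ^ 2 := by
  induction n with
  | zero => simp
  | succ n ih =>
    rw [Finset.sum_range_succ, mul_add]
    rcases Nat.lt_or_ge (2 * n) k with h | h
    · have h1 : 2 * n + 1 - k = 0 := by omega
      have h2 : 2 * n - k = 0 := by omega
      rw [h1]
      rw [h2] at ih
      have : 0 ≤ (2 * (n + 1) - k) ^ 2 := Nat.zero_le _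
      omega
    · obtain ⟨m, hm⟩ := Nat.exists_eq_add_of_le h
      have h1 : 2 * n + 1 - k = m + 1 := by omega
      have h2 : 2 * n - k = m := by omega
      have h3 : 2 * (n + 1) - k = m + 2 := by omega
      rw [h1, h3]
      rw [h2] at ih
      nlinarith

lemma ex_card (k : ℕ) : 4 * (bipGraph (exR k)).edgeSet.ncard ≤ k ^ 2 + 4 * k := by
  classical
  let P : Finset ((_ : Fin k) × (Bool × Fin k)) :=
    (Finset.univ : Finset (Fin k)).sigma fun j => Finset.univ.filter fun a => exR k a j
  have hsub : (bipGraph (exR k)).edgeSet ⊆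
      ((P.image fun x => s(Sum.inl x.2, Sum.inr x.1) : Finset (Sym2 _)) : Set _) := by
    intro e he
    obtain ⟨a, b, hab, rfl⟩ := (bip_mem _ _).1 he
    simp only [Finset.coe_image, Set.mem_image, Finset.mem_coe]
    exact ⟨⟨b, a⟩, by simp [P, hab], rfl⟩
  have h1 : (bipGraph (exR k)).edgeSet.ncard ≤ P.card := by
    refine (Set.ncard_le_ncard hsub (Finset.finite_toSet _)).trans ?_
    rw [Set.ncard_coe_finset]
    exact Finset.card_image_le
  have h2 : ∀ j : Fin k, (Finset.univ.filter fun a => exR k a j).card ≤ (2 * j.1 + 1 - k) + 1 := by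
    intro j
    have hs : (Finset.univ.filter fun a => exR k a j) ⊆
        insert (false, j) ((Finset.univ.filter fun a => exR k a j).erase (false, j)) :=
      Finset.subset_insert_iff.2 (le_refl _)
    refine (Finset.card_le_card hs).trans ((Finset.card_insert_le _ _).trans ?_)
    refine Nat.add_le_add_right ?_ 1
    have : ((Finset.univ.filter fun a => exR k a j).erase (false, j)).card ≤
        (Finset.Icc (k - j.1) j.1).card := by
      apply Finset.card_le_card_of_injOn (fun a => a.2.1)
      · rintro ⟨t, i⟩ h
        cases t <;> simp [exR] at * <;> grind
      · rintro ⟨t, i⟩ h ⟨t', i'⟩ h' hh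
        cases t <;> cases t' <;> simp [exR] at * <;> grind
    rw [Nat.card_Icc] at this
    omega
  have h3 : P.card ≤ ∑ j : Fin k, ((2 * j.1 + 1 - k) + 1) := by
    rw [Finset.card_sigma]
    exact Finset.sum_le_sum fun j _ => h2 j
  rw [Finset.sum_add_distrib, Fin.sum_univ_eq_sum_range (fun j => 2 * j + 1 - k)] at h3
  have h4 := sum_bound k k
  have h5 : 2 * k - k = k := by omega
  rw [h5] at h4
  simp at h3
  omega

theorem stmt_17 (k : ℕ) (hk : 1 ≤ k) :
    (∀ (V : Type) [Fintype V] (G : SimpleGraph V), HGood (matchingGraph k) G →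
      (k : ℝ) ^ 2 / 4 ≤ (G.edgeSet.ncard : ℝ)) ∧
    (∃ (n : ℕ) (G : SimpleGraph (Fin n)), G.Colorable 2 ∧ HGood (matchingGraph k) G ∧
      (G.edgeSet.ncard : ℝ) ≤ (k : ℝ) ^ 2 / 4 + k) := by
  refine ⟨?_, ?_⟩
  · intro V _ G hG
    have h := lower_bound G hG
    have h' : (k : ℝ) * (k + 1) ≤ 4 * (G.edgeSet.ncard : ℝ) := by exact_mod_cast h
    have : (0 : ℝ) ≤ k := Nat.cast_nonneg k
    nlinarith
  · let e := (Fintype.equivFin ((Bool × Fin k) ⊕ Fin k)).symm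
    refine ⟨_, (bipGraph (exR k)).comap e, ?_, transport _ _ e (ex_good k), ?_⟩
    · exact (bip_colorable (exR k)).of_hom (SimpleGraph.Iso.comap e _).toHom
    · have h1 : ((bipGraph (exR k)).comap e).edgeSet.ncard ≤ (bipGraph (exR k)).edgeSet.ncard := by
        refine Set.ncard_le_ncard_of_injOn (Sym2.map e) ?_ ?_ (Set.toFinite _)
        · intro s hs
          exact (comap_mem _ e s).1 hs
        · exact (Sym2.map.injective e.injective).injOn
      have h2 := ex_card k
      have h3 : 4 * ((bipGraph (exR k)).comap e).edgeSet.ncard ≤ k ^ 2 + 4 * k := by omega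
      have h4 : (4 : ℝ) * (((bipGraph (exR k)).comap e).edgeSet.ncard : ℝ) ≤
          (k : ℝ) ^ 2 + 4 * k := by exact_mod_cast h3
      linarith
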